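/- For n ≥ r, the right action of the symplectic group Sp(𝔽^{2n}, ω_n) on the space of symplectic embeddings X(2r,n,2r) = {f: 𝔽^{2r} → 𝔽^{2n} linear | f*ω_n = ω_r} is transitive, and the stabilizer of the canonical symplectic embedding is isomorphic to Sp(𝔽^{2(n−r)}, ω_{n−r}); hence X(2r,n,2r) is homeomorphic to the homogeneous space Sp(𝔽^{2n},ω_n)/Sp(𝔽^{2(n−r)},ω_{n−r}). -/

import Mathlib

open Matrix

/-- The canonical symplectic embedding `𝔽^{2r} → 𝔽^{2n}` (for `r ≤ n`), as a matrix. -/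
def canonEmb (𝔽 : Type*) [Field 𝔽] (n r : ℕ) (h : r ≤ n) :
    Matrix (Fin n ⊕ Fin n) (Fin r ⊕ Fin r) 𝔽 :=
  Matrix.of fun p q =>
    match p, q with
    | Sum.inl i, Sum.inl j => if Fin.castLE h j = i then 1 else 0
    | Sum.inr i, Sum.inr j => if Fin.castLE h j = i then 1 else 0
    | _, _ => 0

/-- The stabilizer of the canonical symplectic embedding inside `Sp(𝔽^{2n}, ω_n)`, acting on
embeddings by postcomposition. -/
def stab (𝔽 : Type*) [Field 𝔽] (n r : ℕ) (h : r ≤ n) :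
    Subgroup ↥(Matrix.symplecticGroup (Fin n) 𝔽) where
  carrier := {S | (S : Matrix (Fin n ⊕ Fin n) (Fin n ⊕ Fin n) 𝔽) * canonEmb 𝔽 n r h
    = canonEmb 𝔽 n r h}
  one_mem' := by simp
  mul_mem' := by
    intro a b ha hb
    simp only [Set.mem_setOf_eq, Submonoid.coe_mul] at *
    rw [Matrix.mul_assoc, hb, ha]
  inv_mem' := by
    intro a ha
    simp only [Set.mem_setOf_eq] at *
    calc ((a⁻¹ : _) : Matrix (Fin n ⊕ Fin n) (Fin n ⊕ Fin n) 𝔽) * canonEmb 𝔽 n r h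
        = (↑(a⁻¹) : Matrix (Fin n ⊕ Fin n) (Fin n ⊕ Fin n) 𝔽)
            * ((a : Matrix (Fin n ⊕ Fin n) (Fin n ⊕ Fin n) 𝔽) * canonEmb 𝔽 n r h) := by
          rw [ha]
      _ = ((↑(a⁻¹) : Matrix (Fin n ⊕ Fin n) (Fin n ⊕ Fin n) 𝔽)
            * (a : Matrix (Fin n ⊕ Fin n) (Fin n ⊕ Fin n) 𝔽)) * canonEmb 𝔽 n r h := by
          rw [Matrix.mul_assoc]
      _ = canonEmb 𝔽 n r h := by
          rw [← Submonoid.coe_mul, inv_mul_cancel, OneMemClass.coe_one, Matrix.one_mul]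

/-- A complement of the canonical embedding, with all block relations. -/
theorem exists_compl (𝔽 : Type*) [Field 𝔽] (n r m : ℕ) (h : r ≤ n) (hm : r + m = n) :
    ∃ D : Matrix (Fin n ⊕ Fin n) (Fin m ⊕ Fin m) 𝔽,
      (canonEmb 𝔽 n r h)ᵀ * canonEmb 𝔽 n r h = 1 ∧ Dᵀ * D = 1 ∧
      (canonEmb 𝔽 n r h)ᵀ * D = 0 ∧ Dᵀ * canonEmb 𝔽 n r h = 0 ∧
      canonEmb 𝔽 n r h * (canonEmb 𝔽 n r h)ᵀ + D * Dᵀ = 1 ∧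
      Matrix.J (Fin n) 𝔽 * canonEmb 𝔽 n r h = canonEmb 𝔽 n r h * Matrix.J (Fin r) 𝔽 ∧
      Matrix.J (Fin n) 𝔽 * D = D * Matrix.J (Fin m) 𝔽 := by
  subst hm
  let A : Matrix (Fin (r + m)) (Fin r) 𝔽 := Matrix.of fun i j => if Fin.castLE h j = i then 1 else 0
  let E : Matrix (Fin (r + m)) (Fin m) 𝔽 := Matrix.of fun i j => if Fin.natAdd r j = i then 1 else 0
  have hC : canonEmb 𝔽 (r + m) r h = fromBlocks A 0 0 A := by
    ext (i | i) (j | j) <;> rfl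
  have hne : ∀ (i : Fin r) (j : Fin m), Fin.castLE h i ≠ Fin.natAdd r j := by
    intro i j hij
    have := congrArg Fin.val hij
    simp at this
    omega
  have h1 : Aᵀ * A = 1 := by
    ext i j
    simp [A, Matrix.mul_apply, Matrix.one_apply, eq_comm]
  have h2 : Eᵀ * E = 1 := by
    ext i j
    simp [E, Matrix.mul_apply, Matrix.one_apply, eq_comm]
  have h3 : Aᵀ * E = 0 := by
    ext i j
    simp [A, E, Matrix.mul_apply]
    exact hne i j
  have h4 : Eᵀ * A = 0 := by
    ext i j
    simp [A, E, Matrix.mul_apply]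
    exact (hne j i).symm
  have h5 : A * Aᵀ + E * Eᵀ = 1 := by
    ext i j
    have key := Fin.sum_univ_add (fun k : Fin (r + m) =>
      (if k = i then (1 : 𝔽) else 0) * (if k = j then 1 else 0))
    have : (A * Aᵀ + E * Eᵀ) i j = ∑ k : Fin (r + m),
      (if k = i then (1 : 𝔽) else 0) * (if k = j then 1 else 0) := by
      rw [key]; rfl
    rw [this]
    simp [Matrix.one_apply, eq_comm]
  refine ⟨fromBlocks E 0 0 E, ?_⟩
  rw [hC]
  simp only [fromBlocks_transpose, fromBlocks_multiply, fromBlocks_add, Matrix.J, transpose_zero,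
    Matrix.mul_zero, Matrix.zero_mul, add_zero, zero_add, h1, h2, h3, h4, h5, fromBlocks_one,
    fromBlocks_zero, Matrix.mul_one, Matrix.one_mul, Matrix.neg_mul, Matrix.mul_neg, neg_zero, and_self]

theorem canonEmb_comp (𝔽 : Type*) [Field 𝔽] (n k r : ℕ) (h : r ≤ k) (h' : k ≤ n) :
    canonEmb 𝔽 n k h' * canonEmb 𝔽 k r h = canonEmb 𝔽 n r (h.trans h') := by
  ext (i | i) (j | j) <;> simp [canonEmb, Matrix.mul_apply, Fintype.sum_sum_type]

theorem canonEmb_self (𝔽 : Type*) [Field 𝔽] (n : ℕ) : canonEmb 𝔽 n n le_rfl = 1 := by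
  ext (i | i) (j | j) <;> simp [canonEmb, Matrix.one_apply, eq_comm]

theorem J_alt {𝔽 : Type*} [Field 𝔽] {n : ℕ} (u v : Fin n ⊕ Fin n → 𝔽) :
    u ⬝ᵥ (Matrix.J (Fin n) 𝔽 *ᵥ v) = - (v ⬝ᵥ (Matrix.J (Fin n) 𝔽 *ᵥ u)) := by
  rw [dotProduct_mulVec, ← mulVec_transpose, J_transpose, neg_mulVec, neg_dotProduct,
    dotProduct_comm]

theorem J_self {𝔽 : Type*} [Field 𝔽] {n : ℕ} (u : Fin n ⊕ Fin n → 𝔽) :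
    u ⬝ᵥ (Matrix.J (Fin n) 𝔽 *ᵥ u) = 0 := by
  simp [Matrix.J, dotProduct, Matrix.mulVec, Fintype.sum_sum_type, Matrix.one_apply, mul_comm]

/-- A symplectic plane in the orthogonal complement of a non-surjective symplectic embedding. -/
theorem exists_plane {𝔽 : Type*} [Field 𝔽] {n r : ℕ} (h : r < n)
    (M : Matrix (Fin n ⊕ Fin n) (Fin r ⊕ Fin r) 𝔽)
    (hM : Mᵀ * Matrix.J (Fin n) 𝔽 * M = Matrix.J (Fin r) 𝔽) :
    ∃ W : Matrix (Fin n ⊕ Fin n) (Fin 1 ⊕ Fin 1) 𝔽,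
      Wᵀ * Matrix.J (Fin n) 𝔽 * W = Matrix.J (Fin 1) 𝔽 ∧ Mᵀ * Matrix.J (Fin n) 𝔽 * W = 0 := by
  have hk : LinearMap.ker (Matrix.toLin' (Mᵀ * Matrix.J (Fin n) 𝔽)) ≠ ⊥ := by
    apply LinearMap.ker_ne_bot_of_finrank_lt
    simp
    omega
  obtain ⟨u, hu, hu0⟩ := (Submodule.ne_bot_iff _).mp hk
  rw [LinearMap.mem_ker, toLin'_apply] at hu
  have hJu : Matrix.J (Fin n) 𝔽 *ᵥ u ≠ 0 := by
    intro h0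
    apply hu0
    have := congrArg (fun x => Matrix.J (Fin n) 𝔽 *ᵥ x) h0
    simpa [mulVec_mulVec, J_squared, neg_mulVec] using this
  obtain ⟨i, hi⟩ := Function.ne_iff.mp hJu
  let w : Fin n ⊕ Fin n → 𝔽 := Pi.single i ((Matrix.J (Fin n) 𝔽 *ᵥ u) i)⁻¹
  have hw : w ⬝ᵥ (Matrix.J (Fin n) 𝔽 *ᵥ u) = 1 := by
    simp only [w, single_dotProduct]
    exact inv_mul_cancel₀ hi
  let x := (Matrix.J (Fin r) 𝔽 * Mᵀ * Matrix.J (Fin n) 𝔽) *ᵥ w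
  let v := w + M *ᵥ x
  have hv : (Mᵀ * Matrix.J (Fin n) 𝔽) *ᵥ v = 0 := by
    simp only [v, x, mulVec_add, mulVec_mulVec, ← Matrix.mul_assoc, hM, J_squared]
    simp [neg_mulVec]
  have hvu : v ⬝ᵥ (Matrix.J (Fin n) 𝔽 *ᵥ u) = 1 := by
    have : (M *ᵥ x) ⬝ᵥ (Matrix.J (Fin n) 𝔽 *ᵥ u) = 0 := by
      rw [dotProduct_comm, dotProduct_mulVec, ← mulVec_transpose, mulVec_mulVec, hu,
        zero_dotProduct]
    simp only [v, add_dotProduct, hw, this, add_zero]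
  have huv : u ⬝ᵥ (Matrix.J (Fin n) 𝔽 *ᵥ v) = -1 := by rw [J_alt, hvu]
  let W : Matrix (Fin n ⊕ Fin n) (Fin 1 ⊕ Fin 1) 𝔽 :=
    Matrix.of fun i j => Sum.elim (fun _ => u i) (fun _ => v i) j
  refine ⟨W, ?_, ?_⟩
  · have ent : ∀ a b, (Wᵀ * Matrix.J (Fin n) 𝔽 * W) a b =
        (Wᵀ a) ⬝ᵥ (Matrix.J (Fin n) 𝔽 *ᵥ (Wᵀ b)) := by
      intro a b
      rw [Matrix.mul_assoc]
      rfl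
    ext (a | a) (b | b) <;> rw [ent]
    · exact (J_self u).trans (by simp [Matrix.J])
    · exact huv.trans (by simp [Matrix.J, Subsingleton.elim a b])
    · exact hvu.trans (by simp [Matrix.J, Subsingleton.elim a b])
    · exact (J_self v).trans (by simp [Matrix.J])
  · ext a (b | b)
    · exact congrFun hu a
    · exact congrFun hv a

/-- Every symplectic embedding extends to a symplectic automorphism. -/
theorem exists_ext {𝔽 : Type*} [Field 𝔽] {n : ℕ} (m : ℕ) : ∀ (r : ℕ) (h : r ≤ n), r + m = n →
    ∀ (M : Matrix (Fin n ⊕ Fin n) (Fin r ⊕ Fin r) 𝔽),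
    Mᵀ * Matrix.J (Fin n) 𝔽 * M = Matrix.J (Fin r) 𝔽 →
    ∃ S ∈ Matrix.symplecticGroup (Fin n) 𝔽, S * canonEmb 𝔽 n r h = M := by
  induction m with
  | zero =>
    intro r h hr M hM
    obtain rfl : r = n := by omega
    exact ⟨M, SymplecticGroup.mem_iff'.2 hM, by rw [canonEmb_self, Matrix.mul_one]⟩
  | succ m ih =>
    intro r h hr M hM
    obtain ⟨W, hW, hMW⟩ := exists_plane (by omega) M hM
    have hWM : Wᵀ * Matrix.J (Fin n) 𝔽 * M = 0 := by
      have := congrArg Matrix.transpose hMW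
      simpa [Matrix.transpose_mul, J_transpose, Matrix.mul_assoc] using this
    obtain ⟨D, hCC, hDD, hCD, hDC, h1, hJC, hJD⟩ :=
      exists_compl 𝔽 (r + 1) r 1 (Nat.le_succ r) rfl
    set C := canonEmb 𝔽 (r + 1) r (Nat.le_succ r) with hCdef
    obtain ⟨S, hS, hSM⟩ := ih (r + 1) (by omega) (by omega) (M * Cᵀ + W * Dᵀ) (by
      calc (M * Cᵀ + W * Dᵀ)ᵀ * Matrix.J (Fin n) 𝔽 * (M * Cᵀ + W * Dᵀ)
          = C * (Mᵀ * Matrix.J (Fin n) 𝔽 * M) * Cᵀ + C * (Mᵀ * Matrix.J (Fin n) 𝔽 * W) * Dᵀ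
            + D * (Wᵀ * Matrix.J (Fin n) 𝔽 * M) * Cᵀ
            + D * (Wᵀ * Matrix.J (Fin n) 𝔽 * W) * Dᵀ := by
            simp only [transpose_add, transpose_mul, transpose_transpose, Matrix.add_mul,
              Matrix.mul_add, Matrix.mul_assoc]
            abel
        _ = Matrix.J (Fin (r + 1)) 𝔽 * (C * Cᵀ + D * Dᵀ) := by
            rw [hM, hW, hMW, hWM, ← hJC, ← hJD]
            simp [Matrix.mul_add, Matrix.mul_assoc]
        _ = _ := by rw [h1, Matrix.mul_one])
    refine ⟨S, hS, ?_⟩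
    rw [← canonEmb_comp 𝔽 n (r + 1) r (Nat.le_succ r) (by omega), ← Matrix.mul_assoc, hSM,
      ← hCdef, Matrix.add_mul, Matrix.mul_assoc, Matrix.mul_assoc, hCC, hDC]
    simp

theorem canonEmb_symp (𝔽 : Type*) [Field 𝔽] (n r : ℕ) (h : r ≤ n) :
    (canonEmb 𝔽 n r h)ᵀ * Matrix.J (Fin n) 𝔽 * canonEmb 𝔽 n r h = Matrix.J (Fin r) 𝔽 := by
  obtain ⟨D, hCC, -, -, -, -, hJC, -⟩ := exists_compl 𝔽 n r (n - r) h (by omega)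
  rw [Matrix.mul_assoc, hJC, ← Matrix.mul_assoc, hCC, Matrix.one_mul]

theorem symp_trans {𝔽 : Type*} [Field 𝔽] (n r : ℕ) (h : r ≤ n)
    (M M' : {M : Matrix (Fin n ⊕ Fin n) (Fin r ⊕ Fin r) 𝔽 //
            Mᵀ * Matrix.J (Fin n) 𝔽 * M = Matrix.J (Fin r) 𝔽}) :
    ∃ S : ↥(Matrix.symplecticGroup (Fin n) 𝔽),
      (S : Matrix (Fin n ⊕ Fin n) (Fin n ⊕ Fin n) 𝔽) * M'.1 = M.1 := by
  obtain ⟨S, hS, hSM⟩ := exists_ext (n - r) r h (by omega) M.1 M.2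
  obtain ⟨S', hS', hSM'⟩ := exists_ext (n - r) r h (by omega) M'.1 M'.2
  refine ⟨⟨S, hS⟩ * ⟨S', hS'⟩⁻¹, ?_⟩
  have hinv : ((⟨S', hS'⟩⁻¹ : ↥(Matrix.symplecticGroup (Fin n) 𝔽)) :
      Matrix (Fin n ⊕ Fin n) (Fin n ⊕ Fin n) 𝔽) * S' = 1 := by
    have := congrArg Subtype.val (inv_mul_cancel (⟨S', hS'⟩ : ↥(Matrix.symplecticGroup (Fin n) 𝔽)))
    exact this
  rw [Submonoid.coe_mul, ← hSM', Matrix.mul_assoc, ← Matrix.mul_assoc _ S', hinv, Matrix.one_mul,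
    hSM]

theorem stab_iso (𝔽 : Type*) [Field 𝔽] (n r : ℕ) (h : r ≤ n) :
    Nonempty (↥(stab 𝔽 n r h) ≃* ↥(Matrix.symplecticGroup (Fin (n - r)) 𝔽)) := by
  obtain ⟨D, hCC, hDD, hCD, hDC, h1, hJC, hJD⟩ := exists_compl 𝔽 n r (n - r) h (by omega)
  set C := canonEmb 𝔽 n r h with hCdef
  have hCJ : Cᵀ * Matrix.J (Fin n) 𝔽 = Matrix.J (Fin r) 𝔽 * Cᵀ := by
    have := congrArg Matrix.transpose hJC
    simpa [Matrix.transpose_mul, J_transpose] using this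
  have hDJ : Dᵀ * Matrix.J (Fin n) 𝔽 = Matrix.J (Fin (n - r)) 𝔽 * Dᵀ := by
    have := congrArg Matrix.transpose hJD
    simpa [Matrix.transpose_mul, J_transpose] using this
  have hfix : ∀ S : ↥(stab 𝔽 n r h), S.1.1 * C = C := fun S => S.2
  have hfix' : ∀ S : ↥(stab 𝔽 n r h), Cᵀ * S.1.1 = Cᵀ := by
    intro S
    have hs := SymplecticGroup.mem_iff'.1 S.1.2
    have ht : Cᵀ * S.1.1ᵀ = Cᵀ := by
      rw [← transpose_mul, hfix S]
    have e1 : Matrix.J (Fin r) 𝔽 * (Cᵀ * S.1.1) = Matrix.J (Fin r) 𝔽 * Cᵀ := by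
      rw [← Matrix.mul_assoc, ← hCJ]
      nth_rewrite 1 [← ht]
      rw [Matrix.mul_assoc Cᵀ, Matrix.mul_assoc Cᵀ, hs]
    have e2 := congrArg (fun X => Matrix.J (Fin r) 𝔽 * X) e1
    simpa [← Matrix.mul_assoc, J_squared] using e2
  have hdec : ∀ S : ↥(stab 𝔽 n r h), S.1.1 = C * Cᵀ + D * (Dᵀ * S.1.1 * D) * Dᵀ := by
    intro S
    calc S.1.1 = (C * Cᵀ + D * Dᵀ) * S.1.1 * (C * Cᵀ + D * Dᵀ) := by rw [h1]; simp
      _ = C * (Cᵀ * S.1.1) * (C * Cᵀ + D * Dᵀ) + D * Dᵀ * (S.1.1 * C) * Cᵀ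
          + D * (Dᵀ * S.1.1 * D) * Dᵀ := by
        simp only [Matrix.add_mul, Matrix.mul_add, Matrix.mul_assoc]
        abel
      _ = _ := by
        rw [hfix, hfix', h1, Matrix.mul_one, Matrix.mul_assoc D, hDC]
        simp
  have hDSD : ∀ S : ↥(stab 𝔽 n r h), S.1.1 * D = D * (Dᵀ * S.1.1 * D) := by
    intro S
    nth_rewrite 1 [hdec S]
    rw [Matrix.add_mul, Matrix.mul_assoc C, hCD, Matrix.mul_assoc _ Dᵀ D, hDD]
    simp
  have hmem : ∀ S : ↥(stab 𝔽 n r h),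
      Dᵀ * S.1.1 * D ∈ Matrix.symplecticGroup (Fin (n - r)) 𝔽 := by
    intro S
    rw [SymplecticGroup.mem_iff']
    have hs := SymplecticGroup.mem_iff'.1 S.1.2
    have hD' := hDSD S
    set T := Dᵀ * S.1.1 * D with hT
    calc Tᵀ * Matrix.J (Fin (n - r)) 𝔽 * T
        = Tᵀ * (Dᵀ * D) * Matrix.J (Fin (n - r)) 𝔽 * T := by rw [hDD, Matrix.mul_one]
      _ = (D * T)ᵀ * (D * Matrix.J (Fin (n - r)) 𝔽) * T := by
        simp only [transpose_mul, Matrix.mul_assoc]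
      _ = (D * T)ᵀ * Matrix.J (Fin n) 𝔽 * (D * T) := by
        rw [← hJD]; simp only [Matrix.mul_assoc]
      _ = Dᵀ * (S.1.1ᵀ * Matrix.J (Fin n) 𝔽 * S.1.1) * D := by
        rw [← hD']; simp only [transpose_mul, Matrix.mul_assoc]
      _ = _ := by rw [hs, Matrix.mul_assoc, hJD, ← Matrix.mul_assoc, hDD, Matrix.one_mul]
  let f : ↥(stab 𝔽 n r h) →* ↥(Matrix.symplecticGroup (Fin (n - r)) 𝔽) :=
    { toFun := fun S => ⟨Dᵀ * S.1.1 * D, hmem S⟩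
      map_one' := by
        apply Subtype.ext
        simp [hDD]
      map_mul' := by
        intro S S'
        apply Subtype.ext
        change Dᵀ * (S.1.1 * S'.1.1) * D = (Dᵀ * S.1.1 * D) * (Dᵀ * S'.1.1 * D)
        rw [Matrix.mul_assoc, Matrix.mul_assoc S.1.1, hDSD S']
        simp only [Matrix.mul_assoc] }
  refine ⟨MulEquiv.ofBijective f ⟨?_, ?_⟩⟩
  · intro S S' hSS
    have e : Dᵀ * S.1.1 * D = Dᵀ * S'.1.1 * D := congrArg Subtype.val hSS
    apply Subtype.ext
    apply Subtype.ext
    rw [hdec S, hdec S', e]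
  · intro T
    have hT := SymplecticGroup.mem_iff'.1 T.2
    have hTC : (C * Cᵀ + D * T.1 * Dᵀ) * C = C := by
      rw [Matrix.add_mul, Matrix.mul_assoc, hCC, Matrix.mul_assoc _ Dᵀ C, hDC]
      simp
    have hTD : (C * Cᵀ + D * T.1 * Dᵀ) * D = D * T.1 := by
      rw [Matrix.add_mul, Matrix.mul_assoc, hCD, Matrix.mul_assoc _ Dᵀ D, hDD]
      simp
    have hTmem : C * Cᵀ + D * T.1 * Dᵀ ∈ Matrix.symplecticGroup (Fin n) 𝔽 := by
      rw [SymplecticGroup.mem_iff']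
      have e : Matrix.J (Fin n) 𝔽 * (C * Cᵀ + D * T.1 * Dᵀ) =
          C * (Matrix.J (Fin r) 𝔽 * Cᵀ) + D * (Matrix.J (Fin (n - r)) 𝔽 * T.1 * Dᵀ) := by
        rw [Matrix.mul_add, ← Matrix.mul_assoc, hJC, ← Matrix.mul_assoc, ← Matrix.mul_assoc, hJD]
        simp only [Matrix.mul_assoc]
      have e1 : (C * Cᵀ + D * T.1 * Dᵀ)ᵀ * C = C := by
        simp only [transpose_add, transpose_mul, transpose_transpose]
        rw [Matrix.add_mul, Matrix.mul_assoc, hCC]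
        simp only [Matrix.mul_assoc, hDC]
        simp
      have e2 : (C * Cᵀ + D * T.1 * Dᵀ)ᵀ * D = D * T.1ᵀ := by
        simp only [transpose_add, transpose_mul, transpose_transpose]
        rw [Matrix.add_mul, Matrix.mul_assoc, hCD]
        simp only [Matrix.mul_assoc, hDD]
        simp
      rw [Matrix.mul_assoc, e, Matrix.mul_add, ← Matrix.mul_assoc, e1, ← Matrix.mul_assoc _ D, e2,
        ← Matrix.mul_assoc C, ← hJC]
      have e3 : D * T.1ᵀ * (Matrix.J (Fin (n - r)) 𝔽 * T.1 * Dᵀ)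
          = D * (T.1ᵀ * Matrix.J (Fin (n - r)) 𝔽 * T.1) * Dᵀ := by
        simp only [Matrix.mul_assoc]
      rw [e3, hT, ← hJD, Matrix.mul_assoc, Matrix.mul_assoc, ← Matrix.mul_add, h1, Matrix.mul_one]
    refine ⟨⟨⟨C * Cᵀ + D * T.1 * Dᵀ, hTmem⟩, hTC⟩, ?_⟩
    apply Subtype.ext
    change Dᵀ * (C * Cᵀ + D * T.1 * Dᵀ) * D = T.1
    rw [Matrix.mul_assoc, hTD, ← Matrix.mul_assoc, hDD, Matrix.one_mul]

theorem stab_homeo (𝔽 : Type*) [RCLike 𝔽] (n r : ℕ) (h : r ≤ n) :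
    Nonempty
      ({M : Matrix (Fin n ⊕ Fin n) (Fin r ⊕ Fin r) 𝔽 //
          Mᵀ * Matrix.J (Fin n) 𝔽 * M = Matrix.J (Fin r) 𝔽}
        ≃ₜ (↥(Matrix.symplecticGroup (Fin n) 𝔽) ⧸ stab 𝔽 n r h)) := by
  let G := ↥(Matrix.symplecticGroup (Fin n) 𝔽)
  let X := {M : Matrix (Fin n ⊕ Fin n) (Fin r ⊕ Fin r) 𝔽 //
          Mᵀ * Matrix.J (Fin n) 𝔽 * M = Matrix.J (Fin r) 𝔽}
  have hpG : ProperSpace (Fin n ⊕ Fin n → Fin n ⊕ Fin n → 𝔽) := inferInstance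
  have hpX : ProperSpace (Fin n ⊕ Fin n → Fin r ⊕ Fin r → 𝔽) := inferInstance
  have hsG : SigmaCompactSpace (Matrix (Fin n ⊕ Fin n) (Fin n ⊕ Fin n) 𝔽) :=
    inferInstanceAs (SigmaCompactSpace (Fin n ⊕ Fin n → Fin n ⊕ Fin n → 𝔽))
  have hlX : LocallyCompactSpace (Matrix (Fin n ⊕ Fin n) (Fin r ⊕ Fin r) 𝔽) :=
    inferInstanceAs (LocallyCompactSpace (Fin n ⊕ Fin n → Fin r ⊕ Fin r → 𝔽))
  have hGc : IsClosed ((Matrix.symplecticGroup (Fin n) 𝔽 :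
      Set (Matrix (Fin n ⊕ Fin n) (Fin n ⊕ Fin n) 𝔽))) := by
    have : (Matrix.symplecticGroup (Fin n) 𝔽 :
      Set (Matrix (Fin n ⊕ Fin n) (Fin n ⊕ Fin n) 𝔽)) =
        {A | A * Matrix.J (Fin n) 𝔽 * Aᵀ = Matrix.J (Fin n) 𝔽} := rfl
    rw [this]
    exact isClosed_eq (by fun_prop) continuous_const
  have hXc : IsClosed {M : Matrix (Fin n ⊕ Fin n) (Fin r ⊕ Fin r) 𝔽 |
          Mᵀ * Matrix.J (Fin n) 𝔽 * M = Matrix.J (Fin r) 𝔽} :=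
    isClosed_eq (by fun_prop) continuous_const
  have i1 : SigmaCompactSpace G := hGc.isClosedEmbedding_subtypeVal.sigmaCompactSpace
  have i2 : LocallyCompactSpace X := hXc.isClosedEmbedding_subtypeVal.locallyCompactSpace
  have hvG : Continuous (fun g : G => (g.1 : Matrix (Fin n ⊕ Fin n) (Fin n ⊕ Fin n) 𝔽)) :=
    continuous_subtype_val
  have hvX : Continuous (fun x : X => (x.1 : Matrix (Fin n ⊕ Fin n) (Fin r ⊕ Fin r) 𝔽)) :=
    continuous_subtype_val
  have i3 : IsTopologicalGroup G :=
    { continuous_mul := by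
        refine continuous_induced_rng.2 ?_
        exact (hvG.comp continuous_fst).matrix_mul (hvG.comp continuous_snd)
      continuous_inv := by
        refine continuous_induced_rng.2 ?_
        exact (continuous_const.matrix_mul hvG.matrix_transpose).matrix_mul continuous_const }
  letI act : MulAction G X :=
    { smul := fun S M => ⟨S.1 * M.1, by
        have hS := SymplecticGroup.mem_iff'.1 S.2
        have hM := M.2
        rw [transpose_mul]
        calc M.1ᵀ * S.1ᵀ * Matrix.J (Fin n) 𝔽 * (S.1 * M.1)
            = M.1ᵀ * (S.1ᵀ * Matrix.J (Fin n) 𝔽 * S.1) * M.1 := by simp only [Matrix.mul_assoc]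
          _ = _ := by rw [hS, hM]⟩
      one_smul := fun M => Subtype.ext (Matrix.one_mul M.1)
      mul_smul := fun S S' M => Subtype.ext (Matrix.mul_assoc S.1 S'.1 M.1) }
  have i4 : ContinuousSMul G X := ⟨by
    refine continuous_induced_rng.2 ?_
    exact (hvG.comp continuous_fst).matrix_mul (hvX.comp continuous_snd)⟩
  have i5 : MulAction.IsPretransitive G X := ⟨fun M M' => by
    obtain ⟨S, hS⟩ := symp_trans n r h M' M
    exact ⟨S, Subtype.ext hS⟩⟩
  let x0 : X := ⟨canonEmb 𝔽 n r h, canonEmb_symp 𝔽 n r h⟩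
  have hopen : IsOpenMap (fun g : G => g • x0) := isOpenMap_smul_of_sigmaCompact x0
  have hcont : Continuous (fun g : G => g • x0) := by fun_prop
  have hsurj : Function.Surjective (fun g : G => g • x0) := fun y => MulAction.exists_smul_eq G x0 y
  have hq : Topology.IsQuotientMap (fun g : G => g • x0) := hopen.isQuotientMap hcont hsurj
  have hrel : ∀ a b : G, a • x0 = b • x0 ↔ (a : G ⧸ stab 𝔽 n r h) = b := by
    intro a b
    rw [QuotientGroup.eq]
    have : a⁻¹ * b ∈ stab 𝔽 n r h ↔ (a⁻¹ * b) • x0 = x0 :=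
      ⟨fun hh => Subtype.ext hh, fun hh => congrArg Subtype.val hh⟩
    rw [this, mul_smul, inv_smul_eq_iff, eq_comm]
  let F : G ⧸ stab 𝔽 n r h → X :=
    Quotient.lift (fun g : G => g • x0) (fun a b hab => (hrel a b).2 (Quotient.sound hab))
  have hFc : Continuous F := Continuous.quotient_lift hcont _
  have hFo : IsOpenMap F := by
    intro U hU
    have : F '' U = (fun g : G => g • x0) '' ((fun g : G => (g : G ⧸ stab 𝔽 n r h)) ⁻¹' U) := by
      ext y
      constructor
      · rintro ⟨q, hq, rfl⟩
        obtain ⟨g, rfl⟩ := QuotientGroup.mk_surjective q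
        exact ⟨g, hq, rfl⟩
      · rintro ⟨g, hg, rfl⟩
        exact ⟨_, hg, rfl⟩
    rw [this]
    exact hopen _ (hU.preimage continuous_quot_mk)
  have hFb : Function.Bijective F := by
    constructor
    · intro p q hpq
      obtain ⟨a, rfl⟩ := QuotientGroup.mk_surjective p
      obtain ⟨b, rfl⟩ := QuotientGroup.mk_surjective q
      exact (hrel a b).1 hpq
    · intro y
      obtain ⟨g, hg⟩ := hsurj y
      exact ⟨(g : G ⧸ stab 𝔽 n r h), hg⟩
  exact ⟨((Equiv.ofBijective F hFb).toHomeomorphOfContinuousOpen hFc hFo).symm⟩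

/-- For `n ≥ r`, the right action of `Sp(𝔽^{2n}, ω_n)` (by postcomposition) on the space
`X(2r,n,2r)` of symplectic embeddings `𝔽^{2r} → 𝔽^{2n}` is transitive, the canonical
embedding is symplectic and its stabilizer is isomorphic (as a group) to
`Sp(𝔽^{2(n−r)}, ω_{n−r})`; hence `X(2r,n,2r)` is homeomorphic to the homogeneous space
`Sp(𝔽^{2n},ω_n)/Sp(𝔽^{2(n−r)},ω_{n−r})`. -/
theorem stmt8 {𝔽 : Type*} [RCLike 𝔽] (n r : ℕ) (h : r ≤ n) :
    ((canonEmb 𝔽 n r h)ᵀ * Matrix.J (Fin n) 𝔽 * canonEmb 𝔽 n r h = Matrix.J (Fin r) 𝔽)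
      ∧ (∀ M M' : {M : Matrix (Fin n ⊕ Fin n) (Fin r ⊕ Fin r) 𝔽 //
            Mᵀ * Matrix.J (Fin n) 𝔽 * M = Matrix.J (Fin r) 𝔽},
          ∃ S : ↥(Matrix.symplecticGroup (Fin n) 𝔽),
            (S : Matrix (Fin n ⊕ Fin n) (Fin n ⊕ Fin n) 𝔽) * M'.1 = M.1)
      ∧ Nonempty (↥(stab 𝔽 n r h) ≃* ↥(Matrix.symplecticGroup (Fin (n - r)) 𝔽))
      ∧ Nonempty
          ({M : Matrix (Fin n ⊕ Fin n) (Fin r ⊕ Fin r) 𝔽 //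
              Mᵀ * Matrix.J (Fin n) 𝔽 * M = Matrix.J (Fin r) 𝔽}
            ≃ₜ (↥(Matrix.symplecticGroup (Fin n) 𝔽) ⧸ stab 𝔽 n r h)) := by
  exact ⟨canonEmb_symp 𝔽 n r h, symp_trans n r h, stab_iso 𝔽 n r h, stab_homeo 𝔽 n r h⟩
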